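/- Let d ≥ 2 and r ≥ 1 be integers. There is a constant c(r,d) > 0 such that for every m ≥ 1, Θ_m(U(C^r[0,1]^d), L_1[0,1]^d) ≥ c(r,d) m^{−r/(d−1)}. -/

import Mathlib

open MeasureTheory

/-- The closed unit cube `[0,1]^d`. -/
def unitCube (d : ℕ) : Set (Fin d → ℝ) := Set.univ.pi fun _ => Set.Icc 0 1

/-- Partial derivative (within the unit cube) in direction `i`. -/
noncomputable def pdermW (d : ℕ) (i : Fin d) (f : (Fin d → ℝ) → ℝ) :
    (Fin d → ℝ) → ℝ :=
  fun x => fderivWithin ℝ f (unitCube d) x (Pi.single i 1)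

/-- Iterated partial derivative (within the unit cube) along a list of coordinates. -/
noncomputable def iterPDW (d : ℕ) : List (Fin d) → ((Fin d → ℝ) → ℝ) → (Fin d → ℝ) → ℝ
  | [], f => f
  | i :: L, f => pdermW d i (iterPDW d L f)

/-- The unit ball `U(C^r[0,1]^d)`: functions with all partial derivatives of total order
at most `r` existing, continuous, and bounded by `1` on the cube. -/
def UCr (d r : ℕ) : Set ((Fin d → ℝ) → ℝ) :=
  {f | ContDiffOn ℝ r f (unitCube d) ∧
    ∀ L : List (Fin d), L.length ≤ r → ∀ x ∈ unitCube d, |iterPDW d L f x| ≤ 1}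

/-- The error of best `m`-term approximation of `f` by sums of tensor products, in
`L₁(μ)`. -/
noncomputable def theta1 (d m : ℕ) (μ : Measure (Fin d → ℝ)) (f : (Fin d → ℝ) → ℝ) :
    ℝ :=
  sInf {r : ℝ | ∃ u : Fin m → Fin d → ℝ → ℝ,
    (∀ s i, Measurable (u s i)) ∧
    Integrable (fun x : Fin d → ℝ => ∑ s, ∏ i, u s i (x i)) μ ∧
    r = ∫ x, |f x - ∑ s, ∏ i, u s i (x i)| ∂μ}

/-!
Signed bumps of height about `n ^ (-r)`, one on each cell of an `n ^ d` grid, sum to a function of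
the class. Fixing the relative position of a point in its cell turns an `m`-term approximant into
an array on the grid whose entries are polynomials of degree `d` in `m * d * n` parameters.

Suppose such arrays came close to every sign pattern off a small set of cells. By pigeonhole one
exceptional set serves many sign patterns. On these, the product of the entries over `t` other
cells is a polynomial of degree `d * t` in the parameters which correlates with the Walsh function
of the chosen cells. Bessel's inequality bounds the number of such Walsh functions by the dimension
of the space of these polynomials, which is too small when `m * d * n` is small against `n ^ d`.

Hence some sign pattern is missed on a positive proportion of the cells, at every relative position
in the middle of the cell. Averaging over the positions gives an error of order `n ^ (-r)`, and
`n` can be taken of order `m ^ (1 / (d - 1))`.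
-/

open Finset Module MvPolynomial

section Bessel

variable {𝕜 E ι : Type*} [RCLike 𝕜] [NormedAddCommGroup E] [InnerProductSpace 𝕜 E]
  {Y : ι → E} (V : Submodule 𝕜 E) [FiniteDimensional 𝕜 V] (s : Finset ι)

theorem sum_sq_norm_orthogonalProjectionOnto_le_finrank (hY : Orthonormal 𝕜 Y) :
    ∑ k ∈ s, ‖V.orthogonalProjectionOnto (Y k)‖ ^ 2 ≤ finrank 𝕜 V := by
  let e := stdOrthonormalBasis 𝕜 V
  have parseval (k : ι) :
      ‖V.orthogonalProjectionOnto (Y k)‖ ^ 2 = ∑ i, ‖inner 𝕜 (Y k) (e i : E)‖ ^ 2 := by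
    simp_rw [← e.sum_sq_norm_inner_left, V.inner_orthogonalProjectionOnto_eq_of_mem_right]
  have bessel (i : Fin (finrank 𝕜 V)) : ∑ k ∈ s, ‖inner 𝕜 (Y k) (e i : E)‖ ^ 2 ≤ 1 := by
    have norm_e : ‖(e i : E)‖ = 1 := e.orthonormal.1 i
    simpa [norm_e] using hY.sum_inner_products_le (e i : E) (s := s)
  calc ∑ k ∈ s, ‖V.orthogonalProjectionOnto (Y k)‖ ^ 2
      = ∑ i, ∑ k ∈ s, ‖inner 𝕜 (Y k) (e i : E)‖ ^ 2 := by simp_rw [parseval, sum_comm (s := s)]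
    _ ≤ ∑ _i : Fin (finrank 𝕜 V), (1 : ℝ) := sum_le_sum fun i _ => bessel i
    _ = finrank 𝕜 V := by simp

theorem card_mul_le_finrank_of_correlated (hY : Orthonormal 𝕜 Y) {g : ι → E} {c : ℝ}
    (hgV : ∀ k ∈ s, g k ∈ V) (hg : ∀ k ∈ s, g k ≠ 0)
    (hc : ∀ k ∈ s, c * ‖g k‖ ^ 2 ≤ ‖inner 𝕜 (Y k) (g k)‖ ^ 2) :
    #s * c ≤ finrank 𝕜 V := by
  have le_projection : ∀ k ∈ s, c ≤ ‖V.orthogonalProjectionOnto (Y k)‖ ^ 2 := by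
    intro k hk
    have cauchy_schwarz : ‖inner 𝕜 (Y k) (g k)‖ ≤ ‖V.orthogonalProjectionOnto (Y k)‖ * ‖g k‖ := by
      rw [← V.inner_orthogonalProjectionOnto_eq_of_mem_right ⟨g k, hgV k hk⟩]
      exact norm_inner_le_norm _ _
    refine le_of_mul_le_mul_right ((hc k hk).trans ?_) (pow_pos (norm_pos_iff.2 (hg k hk)) 2)
    rw [← mul_pow]
    gcongr
  rw [← nsmul_eq_mul]
  exact (card_nsmul_le_sum _ _ _ le_projection).trans
    (sum_sq_norm_orthogonalProjectionOnto_le_finrank V s hY)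

end Bessel

section Walsh

variable {J : Type*}

/-- The Walsh function `σ ↦ ∏ j ∈ S, σ j`, as a real character of the group of sign vectors
indexed by `J`. -/
noncomputable def walsh (S : Finset J) : (J → ℤˣ) →* ℝ :=
  (Int.castRingHom ℝ : ℤ →* ℝ).comp ((Units.coeHom ℤ).comp (∏ j ∈ S, Pi.evalMonoidHom _ j))

theorem walsh_apply (S : Finset J) (σ : J → ℤˣ) : walsh S σ = ∏ j ∈ S, ((σ j : ℤ) : ℝ) := by
  simp [walsh]

theorem walsh_mul_self (S : Finset J) (σ : J → ℤˣ) : walsh S σ * walsh S σ = 1 := by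
  rw [← map_mul, show σ * σ = 1 from funext fun j => Int.units_mul_self (σ j), map_one]

variable [DecidableEq J]

theorem walsh_mulSingle_neg_one (S : Finset J) (j : J) :
    walsh S (Pi.mulSingle j (-1)) = if j ∈ S then -1 else 1 := by
  rw [walsh_apply, ← prod_ite_eq S j fun _ => (-1 : ℝ)]
  refine prod_congr rfl fun i _ => ?_
  rcases eq_or_ne i j with rfl | hij
  · simp
  · simp [hij, hij.symm]

variable [Fintype J]

theorem sum_walsh_mul_walsh_of_ne {S S' : Finset J} (h : S ≠ S') :
    ∑ σ, walsh S σ * walsh S' σ = 0 := by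
  refine sum_hom_units_eq_zero (walsh S * walsh S') fun heq => h (Finset.ext fun j => ?_)
  have hj := DFunLike.congr_fun heq (Pi.mulSingle j (-1))
  rw [MonoidHom.mul_apply, walsh_mulSingle_neg_one, walsh_mulSingle_neg_one,
    MonoidHom.one_apply] at hj
  by_cases hS : j ∈ S <;> by_cases hS' : j ∈ S' <;> simp only [hS, hS', if_true, if_false] at hj ⊢
    <;> norm_num at hj

/-- The Walsh functions, normalised to an orthonormal family in `ℓ²` of the sign vectors. -/
noncomputable def walshVec (S : Finset J) : EuclideanSpace ℝ (J → ℤˣ) :=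
  (√(2 ^ Fintype.card J))⁻¹ • WithLp.toLp 2 (walsh S : (J → ℤˣ) → ℝ)

theorem inner_walshVec (S : Finset J) (g : EuclideanSpace ℝ (J → ℤˣ)) :
    inner ℝ (walshVec S) g = (√(2 ^ Fintype.card J))⁻¹ * ∑ σ, walsh S σ * g σ := by
  simp [walshVec, inner_smul_left, PiLp.inner_apply, mul_comm]

theorem orthonormal_walshVec : Orthonormal ℝ (walshVec (J := J)) := by
  rw [orthonormal_iff_ite]
  intro S S'
  have entry (σ : J → ℤˣ) : walshVec S' σ = (√(2 ^ Fintype.card J))⁻¹ * walsh S' σ := rfl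
  simp_rw [inner_walshVec, entry, mul_left_comm (walsh S _), ← mul_sum]
  split_ifs with h
  · subst h
    simp [walsh_mul_self, ← mul_assoc, ← mul_inv]
  · rw [sum_walsh_mul_walsh_of_ne h, mul_zero, mul_zero]

theorem sq_norm_le_card_mul_of_walsh_mul_mem_Icc {S : Finset J} {F : Finset (J → ℤˣ)}
    {g : EuclideanSpace ℝ (J → ℤˣ)} {lo hi : ℝ} (hlo : 0 ≤ lo) (hg : ∀ σ ∉ F, g σ = 0)
    (hmem : ∀ σ ∈ F, walsh S σ * g σ ∈ Set.Icc lo hi) : ‖g‖ ^ 2 ≤ #F * hi ^ 2 := by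
  rw [EuclideanSpace.norm_sq_eq, ← sum_subset (subset_univ F) fun σ _ hσ => by
    rw [hg σ hσ, norm_zero, sq, zero_mul], ← nsmul_eq_mul]
  refine sum_le_card_nsmul _ _ _ fun σ hσ => ?_
  have sq_eq : ‖g σ‖ ^ 2 = (walsh S σ * g σ) ^ 2 := by
    rw [mul_pow, sq (walsh S σ), walsh_mul_self, one_mul, Real.norm_eq_abs, sq_abs]
  rw [sq_eq]
  exact pow_le_pow_left₀ (hlo.trans (hmem σ hσ).1) (hmem σ hσ).2 2

theorem card_mul_le_sum_walsh_mul {S : Finset J} {F : Finset (J → ℤˣ)}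
    {g : (J → ℤˣ) → ℝ} {lo : ℝ} (hg : ∀ σ ∉ F, g σ = 0)
    (hle : ∀ σ ∈ F, lo ≤ walsh S σ * g σ) : #F * lo ≤ ∑ σ, walsh S σ * g σ := by
  rw [← sum_subset (subset_univ F) fun σ _ hσ => by rw [hg σ hσ, mul_zero], ← nsmul_eq_mul]
  exact card_nsmul_le_sum _ _ _ hle

end Walsh

section Counting

theorem pow_le_choose_of_mul_succ_le {q n t : ℕ} (h : t * (q + 1) ≤ n + 1) :
    q ^ t ≤ n.choose t := by
  rcases t.eq_zero_or_pos with rfl | ht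
  · simp
  refine Nat.le_of_mul_le_mul_left ?_ (pow_pos ht t)
  calc t ^ t * q ^ t = (t * q) ^ t := (mul_pow t q t).symm
    _ ≤ (n + 1 - t) ^ t := Nat.pow_le_pow_left (by rw [mul_add_one] at h; omega) t
    _ ≤ n.descFactorial t := n.pow_sub_le_descFactorial t
    _ = t.factorial * n.choose t := n.descFactorial_eq_factorial_mul_choose t
    _ ≤ t ^ t * n.choose t := Nat.mul_le_mul_right _ t.factorial_le_pow

theorem card_filter_card_le_le_exp_mul_pow {J : Type*} [Fintype J] {b : ℕ} (hb : 0 < b)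
    (hbJ : b ≤ Fintype.card J) :
    (#{B : Finset J | #B ≤ b} : ℝ) ≤ (Real.exp 1 * (Fintype.card J / b)) ^ b := by
  set N := Fintype.card J
  have hbR : (0 : ℝ) < b := Nat.cast_pos.2 hb
  have hN : (0 : ℝ) < N := hbR.trans_le (Nat.cast_le.2 hbJ)
  have weight_le_one : (b : ℝ) / N ≤ 1 := (div_le_one hN).2 (Nat.cast_le.2 hbJ)
  -- Weighting `B` by `(b / N) ^ #B` gives total mass `(1 + b / N) ^ N ≤ exp b`.
  have mass : (#{B : Finset J | #B ≤ b} : ℝ) * (b / N) ^ b ≤ Real.exp 1 ^ b :=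
    calc (#{B : Finset J | #B ≤ b} : ℝ) * (b / N) ^ b
        ≤ ∑ B : Finset J with #B ≤ b, ((b : ℝ) / N) ^ #B := by
          rw [← nsmul_eq_mul]
          exact card_nsmul_le_sum _ _ _ fun B hB =>
            pow_le_pow_of_le_one (by positivity) weight_le_one (mem_filter.1 hB).2
      _ ≤ ∑ B : Finset J, ((b : ℝ) / N) ^ #B :=
          sum_le_sum_of_subset_of_nonneg (filter_subset _ _) fun _ _ _ => by positivity
      _ = (b / N + 1) ^ N := by
          simpa using Fintype.sum_pow_mul_eq_add_pow J ((b : ℝ) / N) 1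
      _ ≤ Real.exp (b / N) ^ N := by gcongr; exact Real.add_one_le_exp _
      _ = Real.exp 1 ^ b := by
          rw [← Real.exp_nat_mul, ← Real.exp_nat_mul, mul_div_cancel₀ _ hN.ne', mul_one]
  rw [mul_pow, ← inv_div (b : ℝ), inv_pow, ← div_eq_mul_inv, le_div_iff₀ (by positivity)]
  exact mass

theorem exp_one_mul_sq_le_two_pow (k : ℕ) :
    Real.exp 1 * ((2 ^ (k + 7) : ℕ) : ℝ) ^ 2 ≤ 2 ^ 2 ^ (k + 7) := by
  have exponent : 2 * (k + 7) + 2 ≤ 2 ^ (k + 7) := by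
    have : k < 2 ^ k := Nat.lt_two_pow_self
    rw [pow_add]
    lia
  calc Real.exp 1 * ((2 ^ (k + 7) : ℕ) : ℝ) ^ 2
      ≤ 2 ^ 2 * (2 ^ (k + 7)) ^ 2 := by
        push_cast
        gcongr
        linarith [Real.exp_one_lt_d9]
    _ = 2 ^ (2 * (k + 7) + 2) := by rw [← pow_mul, ← pow_add]; ring_nf
    _ ≤ 2 ^ 2 ^ (k + 7) := pow_le_pow_right₀ one_le_two exponent

theorem card_filter_card_le_le_two_pow {J : Type*} [Fintype J] {a b : ℕ} (hb : 0 < b)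
    (ha : 0 < a) (ha_exp : Real.exp 1 * (a : ℝ) ^ 2 ≤ 2 ^ a) (hJ : Fintype.card J = a ^ 2 * b) :
    #{B : Finset J | #B ≤ b} ≤ 2 ^ (a * b) := by
  have ratio : (Fintype.card J : ℝ) / b = a ^ 2 := by
    rw [hJ, Nat.cast_mul, Nat.cast_pow, mul_div_cancel_right₀ _ (Nat.cast_pos.2 hb).ne']
  have count := card_filter_card_le_le_exp_mul_pow (J := J) hb
    (hJ ▸ Nat.le_mul_of_pos_left b (by positivity))
  rw [ratio] at count
  have := count.trans (pow_le_pow_left₀ (by positivity) ha_exp b)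
  rw [← pow_mul] at this
  exact_mod_cast this

theorem exists_fiber_card_mul_ge {α β : Type*} [Fintype α] [DecidableEq β] [Nonempty α] (f : α → β)
    {t : Finset β} (hf : ∀ a, f a ∈ t) : ∃ y ∈ t, Fintype.card α ≤ #t * #{a | f a = y} := by
  have ht : t.Nonempty := ⟨_, hf (Classical.arbitrary α)⟩
  have htpos : (0 : ℚ) < #t := Nat.cast_pos.2 ht.card_pos
  obtain ⟨y, hy, hle⟩ := exists_le_card_fiber_of_nsmul_le_card_of_maps_to
    (s := (univ : Finset α)) (b := (Fintype.card α : ℚ) / #t) (fun a _ => hf a) ht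
    (by rw [nsmul_eq_mul, mul_div_cancel₀ _ htpos.ne', card_univ])
  rw [div_le_iff₀' htpos] at hle
  exact ⟨y, hy, mod_cast hle⟩

end Counting

section PolynomialImages

/-- Evaluation of a polynomial at the points `w a`, for `a` in the finite set `F`, as a linear map
into `ℓ²`; the coordinates outside `F` are set to `0`. -/
noncomputable def evalOn {α K : Type*} [DecidableEq α] (F : Finset α) (w : α → K → ℝ) :
    MvPolynomial K ℝ →ₗ[ℝ] EuclideanSpace ℝ α :=
  (WithLp.linearEquiv 2 ℝ (α → ℝ)).symm.toLinearMap ∘ₗ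
    LinearMap.pi fun a => if a ∈ F then (aeval (w a)).toLinearMap else 0

theorem evalOn_apply {α K : Type*} [DecidableEq α] (F : Finset α) (w : α → K → ℝ)
    (p : MvPolynomial K ℝ) (a : α) : evalOn F w p a = if a ∈ F then eval (w a) p else 0 := by
  change (if a ∈ F then (aeval (w a)).toLinearMap else 0) p = _
  split_ifs <;> simp [aeval_eq_eval]

theorem sign_mul_mem_Icc {A x : ℝ} (s : ℤˣ) (h : |A * (s : ℤ) - x| ≤ A / 2) :
    (s : ℤ) * x ∈ Set.Icc (A / 2) (3 * A / 2) := by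
  rw [abs_le] at h
  rcases Int.units_eq_one_or s with rfl | rfl <;> push_cast at h ⊢ <;> constructor <;> linarith

variable {J K : Type*} [Fintype J] [Fintype K]

theorem card_mul_card_le_finrank_of_walsh_mul_mem_Icc {lo hi : ℝ} (hlo : 0 < lo) (hhi : lo ≤ hi)
    {F : Finset (J → ℤˣ)} (hF : F.Nonempty) (𝒜 : Finset (Finset J))
    (V : Submodule ℝ (EuclideanSpace ℝ (J → ℤˣ))) (g : Finset J → EuclideanSpace ℝ (J → ℤˣ))
    (hgV : ∀ S ∈ 𝒜, g S ∈ V) (hg : ∀ S ∈ 𝒜, ∀ σ ∉ F, g S σ = 0)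
    (hmem : ∀ S ∈ 𝒜, ∀ σ ∈ F, walsh S σ * g S σ ∈ Set.Icc lo hi) :
    #𝒜 * (#F * lo ^ 2) ≤ hi ^ 2 * finrank ℝ V * 2 ^ Fintype.card J := by
  classical
  obtain ⟨τ, hτ⟩ := hF
  have hi_pos : 0 < hi := hlo.trans_le hhi
  have ne_zero : ∀ S ∈ 𝒜, g S ≠ 0 := fun S hS hgS => by
    have h := (hmem S hS τ hτ).1
    rw [hgS, PiLp.zero_apply, mul_zero] at h
    exact hlo.not_ge h
  have correlated : ∀ S ∈ 𝒜, #F * lo ^ 2 / (hi ^ 2 * 2 ^ Fintype.card J) * ‖g S‖ ^ 2 ≤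
      ‖inner ℝ (walshVec S) (g S)‖ ^ 2 := fun S hS => by
    rw [inner_walshVec, norm_mul, mul_pow, norm_inv, inv_pow, Real.norm_eq_abs (√_), sq_abs,
      Real.sq_sqrt (by positivity), Real.norm_eq_abs, sq_abs]
    calc #F * lo ^ 2 / (hi ^ 2 * 2 ^ Fintype.card J) * ‖g S‖ ^ 2
        ≤ #F * lo ^ 2 / (hi ^ 2 * 2 ^ Fintype.card J) * (#F * hi ^ 2) := by
          gcongr
          exact sq_norm_le_card_mul_of_walsh_mul_mem_Icc hlo.le (hg S hS) (hmem S hS)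
      _ = (2 ^ Fintype.card J)⁻¹ * (#F * lo) ^ 2 := by field_simp
      _ ≤ (2 ^ Fintype.card J)⁻¹ * (∑ σ, walsh S σ * g S σ) ^ 2 := by
          gcongr
          exact card_mul_le_sum_walsh_mul (hg S hS) fun σ hσ => (hmem S hS σ hσ).1
  have bound := card_mul_le_finrank_of_correlated V 𝒜 orthonormal_walshVec hgV ne_zero correlated
  calc #𝒜 * (#F * lo ^ 2)
      = #𝒜 * (#F * lo ^ 2 / (hi ^ 2 * 2 ^ Fintype.card J)) * (hi ^ 2 * 2 ^ Fintype.card J) := by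
        field_simp
    _ ≤ finrank ℝ V * (hi ^ 2 * 2 ^ Fintype.card J) := by gcongr
    _ = hi ^ 2 * finrank ℝ V * 2 ^ Fintype.card J := by ring

theorem finrank_homogeneousSubmodule_eq_choose (R : Type*) [CommRing R] [Nontrivial R] (n : ℕ) :
    finrank R (homogeneousSubmodule K R n) = (Fintype.card K + n - 1).choose n := by
  classical
  have degree_eq_antidiag :
      {e : K →₀ ℕ | e.degree = n} = ((univ : Finset K).finsuppAntidiag n : Set (K →₀ ℕ)) := by
    ext e
    simp [Finsupp.degree_eq_sum]
  rw [homogeneousSubmodule_eq_finsupp_supported, degree_eq_antidiag,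
    show finrank R (AddMonoidAlgebra.supported R R _) = _ from
      finrank_eq_nat_card_basis (basisRestrictSupport R _),
    Nat.card_coe_set_eq, Set.ncard_coe_finset,
    card_finsuppAntidiag_nat_eq_choose, card_univ]

theorem finrank_homogeneousSubmodule_le_two_pow (R : Type*) [CommRing R] [Nontrivial R] (n : ℕ) :
    finrank R (homogeneousSubmodule K R n) ≤ 2 ^ (Fintype.card K + n) := by
  rw [finrank_homogeneousSubmodule_eq_choose]
  exact (Nat.choose_le_two_pow _ _).trans (Nat.pow_le_pow_right two_pos (Nat.sub_le _ _))

variable {p : J → MvPolynomial K ℝ} {k : ℕ} {A : ℝ}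

theorem choose_mul_card_le_of_abs_sub_eval_le (hp : ∀ j, (p j).IsHomogeneous k)
    (hA : 0 < A) (w : (J → ℤˣ) → K → ℝ) {F : Finset (J → ℤˣ)} (hF : F.Nonempty) (G : Finset J)
    (h : ∀ σ ∈ F, ∀ j ∈ G, |A * (σ j : ℤ) - eval (w σ) (p j)| ≤ A / 2) (t : ℕ) :
    (#G).choose t * #F ≤ 9 ^ t * 2 ^ (Fintype.card K + k * t) * 2 ^ Fintype.card J := by
  classical
  let V := (homogeneousSubmodule K ℝ (k * t)).map (evalOn F w)
  have card_eq {S : Finset J} (hS : S ∈ G.powersetCard t) : #S = t := (mem_powersetCard.1 hS).2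
  have mem_V : ∀ S ∈ G.powersetCard t, evalOn F w (∏ j ∈ S, p j) ∈ V := fun S hS =>
    Submodule.mem_map_of_mem <| by
      simpa [card_eq hS, mul_comm k] using IsHomogeneous.prod S p (fun _ => k) fun j _ => hp j
  have finrank_V : finrank ℝ V ≤ 2 ^ (Fintype.card K + k * t) := by
    have : Module.Finite ℝ (homogeneousSubmodule K ℝ (k * t)) :=
      Module.Finite.iff_fg.2 (homogeneousSubmodule_fg K ℝ _)
    exact (Submodule.finrank_map_le _ _).trans (finrank_homogeneousSubmodule_le_two_pow ℝ _)
  have mem_Icc : ∀ S ∈ G.powersetCard t, ∀ σ ∈ F, walsh S σ * evalOn F w (∏ j ∈ S, p j) σ ∈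
      Set.Icc ((A / 2) ^ t) ((3 * A / 2) ^ t) := fun S hS σ hσ => by
    have factor (j : J) (hj : j ∈ S) := sign_mul_mem_Icc (σ j)
      (h σ hσ j ((mem_powersetCard.1 hS).1 hj))
    rw [evalOn_apply, if_pos hσ, eval_prod, walsh_apply, ← prod_mul_distrib, ← card_eq hS]
    simp_rw [← prod_const]
    exact ⟨prod_le_prod (fun _ _ => by positivity) fun j hj => (factor j hj).1,
      prod_le_prod (fun j hj => by linarith [(factor j hj).1]) fun j hj => (factor j hj).2⟩
  have bound := card_mul_card_le_finrank_of_walsh_mul_mem_Icc (by positivity)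
    (by gcongr; linarith) hF (G.powersetCard t) V (fun S => evalOn F w (∏ j ∈ S, p j)) mem_V
    (fun S _ σ hσ => by rw [evalOn_apply, if_neg hσ]) mem_Icc
  have cancelled : ((#G).choose t * #F : ℝ) ≤ 9 ^ t * finrank ℝ V * 2 ^ Fintype.card J := by
    rw [card_powersetCard, show 3 * A / 2 = 3 * (A / 2) by ring, mul_pow 3] at bound
    refine le_of_mul_le_mul_right ?_ (show 0 < ((A / 2) ^ t) ^ 2 by positivity)
    calc _ = (#G).choose t * (#F * ((A / 2) ^ t) ^ 2) := by ring
      _ ≤ _ := bound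
      _ = _ := by rw [show (9 : ℝ) = 3 ^ 2 by norm_num, ← pow_mul, mul_comm 2 t]; ring
  refine (Nat.cast_le (α := ℝ)).1 ?_
  push_cast
  refine cancelled.trans ?_
  gcongr
  exact_mod_cast finrank_V

theorem exists_choose_card_compl_le_of_card_eval_far_le [DecidableEq J]
    (hp : ∀ j, (p j).IsHomogeneous k) (hA : 0 < A) {b : ℕ} (w : (J → ℤˣ) → K → ℝ)
    (hw : ∀ σ, #{j | A / 2 < |A * (σ j : ℤ) - eval (w σ) (p j)|} ≤ b) (t : ℕ) :
    ∃ B : Finset J, #B ≤ b ∧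
      (#Bᶜ).choose t ≤ 9 ^ t * 2 ^ (Fintype.card K + k * t) * #{B : Finset J | #B ≤ b} := by
  let far (σ : J → ℤˣ) : Finset J := {j | A / 2 < |A * (σ j : ℤ) - eval (w σ) (p j)|}
  obtain ⟨B, hB, hfiber⟩ := exists_fiber_card_mul_ge far (t := {B | #B ≤ b}) fun σ => by
    simpa using hw σ
  refine ⟨B, (mem_filter.1 hB).2, ?_⟩
  set F : Finset (J → ℤˣ) := {σ | far σ = B}
  have F_pos : 0 < #F := pos_of_mul_pos_right (Fintype.card_pos.trans_le hfiber) (Nat.zero_le _)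
  have close : ∀ σ ∈ F, ∀ j ∈ Bᶜ, |A * (σ j : ℤ) - eval (w σ) (p j)| ≤ A / 2 := by
    intro σ hσ j hj
    rw [← (mem_filter.1 hσ).2] at hj
    simpa [far] using hj
  have card_signs : Fintype.card (J → ℤˣ) = 2 ^ Fintype.card J := by simp
  refine Nat.le_of_mul_le_mul_right ?_ F_pos
  rw [mul_assoc _ _ (#F)]
  refine (choose_mul_card_le_of_abs_sub_eval_le hp hA w (card_pos.1 F_pos) Bᶜ close t).trans ?_
  rw [← card_signs]
  gcongr

-- With `a = 2 ^ (k + 7)` and `t = a * b`, the previous lemma would give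
-- `(a - 2) ^ t ≤ 9 ^ t * 2 ^ (t + k * t) * 2 ^ t = (36 * 2 ^ k) ^ t`.
theorem exists_sign_forall_lt_card_eval_far (hp : ∀ j, (p j).IsHomogeneous k) (hA : 0 < A)
    {b : ℕ} (hb : 0 < b) (hJ : Fintype.card J = (2 ^ (k + 7)) ^ 2 * b)
    (hK : Fintype.card K ≤ 2 ^ (k + 7) * b) :
    ∃ σ : J → ℤˣ, ∀ w : K → ℝ, b < #{j | A / 2 < |A * (σ j : ℤ) - eval w (p j)|} := by
  classical
  by_contra! hfail
  choose w hw using hfail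
  set a := 2 ^ (k + 7) with ha
  have a_pos : 0 < a := by positivity
  have a_large : 36 * 2 ^ k + 2 < a := by
    have := Nat.one_le_two_pow (n := k)
    rw [ha, pow_add]
    lia
  obtain ⟨B, hB, hchoose⟩ := exists_choose_card_compl_le_of_card_eval_far_le hp hA w hw (a * b)
  have card_small : #{B : Finset J | #B ≤ b} ≤ 2 ^ (a * b) :=
    card_filter_card_le_le_two_pow hb a_pos (exp_one_mul_sq_le_two_pow k) hJ
  have choose_le : (#Bᶜ).choose (a * b) ≤ (36 * 2 ^ k) ^ (a * b) :=
    calc (#Bᶜ).choose (a * b)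
        ≤ 9 ^ (a * b) * 2 ^ (a * b + k * (a * b)) * 2 ^ (a * b) :=
          hchoose.trans (by gcongr; norm_num)
      _ = (36 * 2 ^ k) ^ (a * b) := by
          rw [show 36 = 9 * (2 * 2) from rfl, mul_pow, mul_pow, mul_pow, pow_add, ← pow_mul 2 k]
          ring
  have le_choose : (a - 2) ^ (a * b) ≤ (#Bᶜ).choose (a * b) := by
    refine pow_le_choose_of_mul_succ_le ?_
    obtain ⟨e, he⟩ : ∃ e, a = e + 2 := ⟨a - 2, by lia⟩
    rw [card_compl, hJ, he, Nat.add_sub_cancel]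
    have : (e + 2) * b * (e + 1) + b ≤ (e + 2) ^ 2 * b := by nlinarith
    lia
  exact (le_choose.trans choose_le).not_gt
    (Nat.pow_lt_pow_left (Nat.lt_sub_of_add_lt a_large) (by positivity))

/-- The `m`-term tensor `∑ s, ∏ i, w (s, i, j i)` at the multi-index `j`, as a polynomial in its
entries. -/
noncomputable def tensorPoly (m d n : ℕ) (j : Fin d → Fin n) :
    MvPolynomial (Fin m × Fin d × Fin n) ℝ :=
  ∑ s, ∏ i, X (s, i, j i)

theorem eval_tensorPoly {m d n : ℕ} (w : Fin m × Fin d × Fin n → ℝ) (j : Fin d → Fin n) :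
    eval w (tensorPoly m d n j) = ∑ s, ∏ i, w (s, i, j i) := by
  simp [tensorPoly]

theorem isHomogeneous_tensorPoly {m d n : ℕ} (j : Fin d → Fin n) :
    (tensorPoly m d n j).IsHomogeneous d := by
  refine IsHomogeneous.sum _ _ _ fun s _ => ?_
  simpa using IsHomogeneous.prod univ (fun i => X (s, i, j i)) (fun _ => 1)
    fun i _ => isHomogeneous_X ℝ (s, i, j i)

theorem exists_sign_forall_lt_card_tensor_far {m d n b : ℕ} (hA : 0 < A) (hb : 0 < b)
    (hn : n ^ d = (2 ^ (d + 7)) ^ 2 * b) (hm : m * (d * n) ≤ 2 ^ (d + 7) * b) :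
    ∃ σ : (Fin d → Fin n) → ℤˣ, ∀ v : Fin m → Fin d → Fin n → ℝ,
      b < #{j | A / 2 < |A * (σ j : ℤ) - ∑ s, ∏ i, v s i (j i)|} := by
  obtain ⟨σ, hσ⟩ := exists_sign_forall_lt_card_eval_far (isHomogeneous_tensorPoly (m := m)) hA hb
    (by simpa using hn) (by simpa using hm)
  exact ⟨σ, fun v => by simpa only [eval_tensorPoly] using hσ fun q => v q.1 q.2.1 q.2.2⟩

end PolynomialImages

section PartialDerivatives

variable {d : ℕ}

theorem isCompact_unitCube : IsCompact (unitCube d) :=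
  isCompact_univ_pi fun _ => isCompact_Icc

theorem volume_unitCube : volume (unitCube d) = 1 := by
  rw [unitCube, volume_pi_pi]
  simp

theorem uniqueDiffOn_unitCube : UniqueDiffOn ℝ (unitCube d) :=
  UniqueDiffOn.univ_pi fun _ => uniqueDiffOn_Icc zero_lt_one

theorem iterPDW_eqOn_iteratedFDeriv {f : (Fin d → ℝ) → ℝ} (L : List (Fin d))
    (hf : ContDiff ℝ L.length f) :
    Set.EqOn (iterPDW d L f)
      (fun x => iteratedFDeriv ℝ L.length f x fun k => Pi.single (L.get k) 1) (unitCube d) := by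
  induction L with
  | nil => exact fun x _ => rfl
  | cons i L ih =>
    intro x hx
    have hlt : (L.length : WithTop ℕ∞) < (i :: L).length := by
      exact_mod_cast Nat.lt_succ_self L.length
    have hdiff : DifferentiableAt ℝ (iteratedFDeriv ℝ L.length f) x :=
      (hf.differentiable_iteratedFDeriv hlt).differentiableAt
    have hdiff_apply : DifferentiableAt ℝ
        (fun y => iteratedFDeriv ℝ L.length f y fun k => Pi.single (L.get k) 1) x := by
      fun_prop
    specialize ih (hf.of_le hlt.le)
    calc iterPDW d (i :: L) f x
        = fderivWithin ℝ (fun y => iteratedFDeriv ℝ L.length f y fun k => Pi.single (L.get k) 1)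
            (unitCube d) x (Pi.single i 1) := by
          rw [iterPDW, pdermW, fderivWithin_congr ih (ih hx)]
      _ = fderiv ℝ (fun y => iteratedFDeriv ℝ L.length f y fun k => Pi.single (L.get k) 1)
            x (Pi.single i 1) := by
          rw [hdiff_apply.fderivWithin (uniqueDiffOn_unitCube x hx)]
      _ = iteratedFDeriv ℝ (i :: L).length f x fun k => Pi.single ((i :: L).get k) 1 :=
          (hdiff.iteratedFDeriv_succ_apply_left' (m := fun k : Fin (L.length + 1) =>
            Pi.single ((i :: L).get k) 1)).symm

theorem abs_iterPDW_le_norm_iteratedFDeriv {f : (Fin d → ℝ) → ℝ} {L : List (Fin d)}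
    (hf : ContDiff ℝ L.length f) {x : Fin d → ℝ} (hx : x ∈ unitCube d) :
    |iterPDW d L f x| ≤ ‖iteratedFDeriv ℝ L.length f x‖ := by
  rw [iterPDW_eqOn_iteratedFDeriv L hf hx, ← Real.norm_eq_abs]
  simpa [Pi.norm_single] using
    (iteratedFDeriv ℝ L.length f x).le_opNorm fun k => Pi.single (L.get k) 1

theorem mem_UCr_of_norm_iteratedFDeriv_le_one {r : ℕ} {f : (Fin d → ℝ) → ℝ} (hf : ContDiff ℝ r f)
    (hle : ∀ k ≤ r, ∀ x, ‖iteratedFDeriv ℝ k f x‖ ≤ 1) : f ∈ UCr d r :=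
  ⟨hf.contDiffOn, fun _ hL x hx => (abs_iterPDW_le_norm_iteratedFDeriv
    (hf.of_le (mod_cast hL)) hx).trans (hle _ hL x)⟩

end PartialDerivatives

section BumpSums

theorem norm_sum_le_of_subsingleton_support {ι F : Type*} [Fintype ι] [SeminormedAddCommGroup F]
    {g : ι → F} {C : ℝ} (hC : 0 ≤ C)
    (hg : (Function.support g).Subsingleton) (hle : ∀ j, ‖g j‖ ≤ C) : ‖∑ j, g j‖ ≤ C := by
  by_cases h : ∃ j, g j ≠ 0
  · obtain ⟨j, hj⟩ := h
    rw [Fintype.sum_eq_single j fun i hij => not_not.1 fun hi => hij (hg hi hj)]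
    exact hle j
  · push Not at h
    simpa [h] using hC

variable {E F ι : Type*} [NormedAddCommGroup E] [NormedSpace ℝ E] [NormedAddCommGroup F]
  [NormedSpace ℝ F] {ψ : E → F} {k : ℕ}

theorem exists_norm_iteratedFDeriv_le_of_hasCompactSupport {r : ℕ} (hψ : ContDiff ℝ r ψ)
    (hsupp : HasCompactSupport ψ) :
    ∃ M > 0, ∀ k ≤ r, ∀ x, ‖iteratedFDeriv ℝ k ψ x‖ ≤ M := by
  have bound (k : Fin (r + 1)) : ∃ C, ∀ x, ‖iteratedFDeriv ℝ k ψ x‖ ≤ C :=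
    (hsupp.iteratedFDeriv k).exists_bound_of_continuous
      (hψ.continuous_iteratedFDeriv (mod_cast k.is_le))
  choose C hC using bound
  have C_nonneg (k : Fin (r + 1)) : 0 ≤ C k := (norm_nonneg _).trans (hC k 0)
  refine ⟨1 + ∑ k, C k, add_pos_of_pos_of_nonneg one_pos (sum_nonneg fun k _ => C_nonneg k),
    fun k hk x => ?_⟩
  calc ‖iteratedFDeriv ℝ k ψ x‖ ≤ C ⟨k, Nat.lt_succ_of_le hk⟩ := hC ⟨k, _⟩ x
    _ ≤ ∑ k, C k := single_le_sum (fun k _ => C_nonneg k) (mem_univ _)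
    _ ≤ 1 + ∑ k, C k := le_add_of_nonneg_left zero_le_one

theorem iteratedFDeriv_const_smul_comp_smul_sub (hψ : ContDiff ℝ k ψ) (c R : ℝ) (v x : E) :
    iteratedFDeriv ℝ k (fun y => c • ψ (R • y - v)) x =
      c • R ^ k • iteratedFDeriv ℝ k ψ (R • x - v) := by
  have hshift : ContDiff ℝ k fun y => ψ (y - v) := by fun_prop
  rw [iteratedFDeriv_const_smul_apply' (by fun_prop), iteratedFDeriv_comp_const_smul R hshift,
    ← iteratedFDeriv_comp_sub]

theorem norm_iteratedFDeriv_sum_smul_comp_smul_sub_le [Fintype ι] (hψ : ContDiff ℝ k ψ) {M : ℝ}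
    (hM : ∀ y, ‖iteratedFDeriv ℝ k ψ y‖ ≤ M) {c : ι → ℝ} {C : ℝ} (hC : 0 ≤ C)
    (hc : ∀ j, |c j| ≤ C) (R : ℝ) {v : ι → E} {x : E}
    (hx : {j | R • x - v j ∈ tsupport ψ}.Subsingleton) :
    ‖iteratedFDeriv ℝ k (fun y => ∑ j, c j • ψ (R • y - v j)) x‖ ≤ C * (|R| ^ k * M) := by
  have hM₀ : 0 ≤ M := (norm_nonneg _).trans (hM 0)
  rw [iteratedFDeriv_fun_sum_apply fun j _ => by fun_prop]
  simp_rw [iteratedFDeriv_const_smul_comp_smul_sub hψ]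
  refine norm_sum_le_of_subsingleton_support (by positivity) (hx.anti fun j hj => ?_) fun j => ?_
  · exact support_iteratedFDeriv_subset k
      (right_ne_zero_of_smul (right_ne_zero_of_smul hj))
  · rw [norm_smul, norm_smul, norm_pow, Real.norm_eq_abs, Real.norm_eq_abs]
    gcongr
    exacts [hc j, hM _]

end BumpSums

section Grid

variable {d n : ℕ}

/-- The cube `[0,1)^d`, whose integer translates tile `ℝ^d`. -/
def halfOpenCube (d : ℕ) : Set (Fin d → ℝ) := Set.univ.pi fun _ => Set.Ico 0 1

/-- The multi-index `j` as a vector: the lower corner of a cell of the grid on `[0,n)^d`. -/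
def gridCorner (j : Fin d → Fin n) : Fin d → ℝ := fun i => ((j i : ℕ) : ℝ)

theorem subsingleton_setOf_sub_gridCorner_mem (y : Fin d → ℝ) :
    {j : Fin d → Fin n | y - gridCorner j ∈ halfOpenCube d}.Subsingleton := by
  intro j hj j' hj'
  funext i
  obtain ⟨lo, hi⟩ := hj i trivial
  obtain ⟨lo', hi'⟩ := hj' i trivial
  simp only [Pi.sub_apply, gridCorner] at lo hi lo' hi'
  have hlt : ((j i : ℕ) : ℝ) < (j' i : ℕ) + 1 := by linarith
  have hlt' : ((j' i : ℕ) : ℝ) < (j i : ℕ) + 1 := by linarith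
  norm_cast at hlt hlt'
  exact Fin.ext (by lia)

/-- The point of the cell with multi-index `j` of the `n`-fold subdivision of the unit cube that
has relative position `z` in its cell. -/
noncomputable def cellPoint (j : Fin d → Fin n) (z : Fin d → ℝ) : Fin d → ℝ :=
  (n : ℝ)⁻¹ • (z + gridCorner j)

theorem smul_cellPoint (hn : n ≠ 0) (j : Fin d → Fin n) (z : Fin d → ℝ) :
    (n : ℝ) • cellPoint j z = z + gridCorner j :=
  smul_inv_smul₀ (Nat.cast_ne_zero.2 hn) _

theorem cellPoint_mem_unitCube (j : Fin d → Fin n) {z : Fin d → ℝ} (hz : z ∈ halfOpenCube d) :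
    cellPoint j z ∈ unitCube d := by
  intro i _
  obtain ⟨lo, hi⟩ := hz i trivial
  have hn : (0 : ℝ) < n := Nat.cast_pos.2 (Nat.zero_lt_of_lt (j i).2)
  have hj : ((j i : ℕ) : ℝ) + 1 ≤ n := by exact_mod_cast (j i).2
  simp only [cellPoint, gridCorner, Pi.smul_apply, Pi.add_apply, smul_eq_mul]
  exact ⟨by positivity, (inv_mul_le_one₀ hn).2 (by linarith)⟩

end Grid

section SignedBumps

variable {d n : ℕ}

/-- A bump function equal to `1` on the cube `[3/8,5/8]^d` and supported in `[1/4,3/4]^d`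
(balls of `Fin d → ℝ` are cubes). -/
noncomputable def cellBump (d : ℕ) : ContDiffBump (fun _ : Fin d => (1 / 2 : ℝ)) where
  rIn := 1 / 8
  rOut := 1 / 4
  rIn_pos := by norm_num
  rIn_lt_rOut := by norm_num

theorem closedBall_half_subset_halfOpenCube {ρ : ℝ} (hρ : ρ < 1 / 2) :
    Metric.closedBall (fun _ : Fin d => (1 / 2 : ℝ)) ρ ⊆ halfOpenCube d := by
  intro y hy i _
  have hi := abs_le.1 ((dist_le_pi_dist y _ i).trans hy)
  exact ⟨by linarith, by linarith⟩

theorem tsupport_cellBump_subset_halfOpenCube : tsupport (cellBump d) ⊆ halfOpenCube d := by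
  rw [(cellBump d).tsupport_eq]
  exact closedBall_half_subset_halfOpenCube (by norm_num [cellBump])

/-- The sum over the cells of the `n`-fold subdivision of the unit cube of the rescaled bumps, the
one of the cell `j` having height `A` and sign `σ j`. -/
noncomputable def signedBumps (A : ℝ) (σ : (Fin d → Fin n) → ℤˣ) (x : Fin d → ℝ) : ℝ :=
  ∑ j, (A * (σ j : ℤ)) • cellBump d ((n : ℝ) • x - gridCorner j)

theorem contDiff_signedBumps {k : ℕ∞} (A : ℝ) (σ : (Fin d → Fin n) → ℤˣ) :
    ContDiff ℝ k (signedBumps A σ) := by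
  have := (cellBump d).contDiff (n := k)
  unfold signedBumps
  fun_prop

theorem signedBumps_cellPoint (hn : n ≠ 0) (A : ℝ) (σ : (Fin d → Fin n) → ℤˣ) (j : Fin d → Fin n)
    {z : Fin d → ℝ} (hz : z ∈ Metric.closedBall (fun _ : Fin d => (1 / 2 : ℝ)) (1 / 8)) :
    signedBumps A σ (cellPoint j z) = A * (σ j : ℤ) := by
  have hone : cellBump d (z + gridCorner j - gridCorner j) = 1 := by
    rw [add_sub_cancel_right]
    exact (cellBump d).one_of_mem_closedBall hz
  have hzero (i : Fin d → Fin n) (hij : i ≠ j) :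
      cellBump d (z + gridCorner j - gridCorner i) = 0 := by
    by_contra hne
    refine hij (subsingleton_setOf_sub_gridCorner_mem (z + gridCorner j)
      (tsupport_cellBump_subset_halfOpenCube (subset_tsupport _ hne)) ?_)
    rw [Set.mem_ofPred_eq, add_sub_cancel_right]
    exact closedBall_half_subset_halfOpenCube (by norm_num) hz
  rw [signedBumps, smul_cellPoint hn, Fintype.sum_eq_single j fun i hij => by
    rw [hzero i hij, smul_zero], hone, smul_eq_mul, mul_one]

theorem signedBumps_mem_UCr {r : ℕ} {M : ℝ} (hM : 0 < M)
    (hbound : ∀ k ≤ r, ∀ x, ‖iteratedFDeriv ℝ k (cellBump d) x‖ ≤ M) (hn : n ≠ 0)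
    (σ : (Fin d → Fin n) → ℤˣ) : signedBumps (M * n ^ r : ℝ)⁻¹ σ ∈ UCr d r := by
  have hn₁ : (1 : ℝ) ≤ n := Nat.one_le_cast.2 (Nat.one_le_iff_ne_zero.2 hn)
  refine mem_UCr_of_norm_iteratedFDeriv_le_one (contDiff_signedBumps _ σ) fun k hk x => ?_
  calc ‖iteratedFDeriv ℝ k (signedBumps (M * n ^ r : ℝ)⁻¹ σ) x‖
      ≤ (M * n ^ r : ℝ)⁻¹ * (|(n : ℝ)| ^ k * M) := by
        refine norm_iteratedFDeriv_sum_smul_comp_smul_sub_le (cellBump d).contDiff (hbound k hk)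
          (by positivity) (fun j => ?_) n ?_
        · rcases Int.units_eq_one_or (σ j) with h | h <;>
            simp [h, abs_mul, abs_of_pos hM]
        · exact (subsingleton_setOf_sub_gridCorner_mem ((n : ℝ) • x)).anti fun j hj =>
            tsupport_cellBump_subset_halfOpenCube hj
    _ ≤ (M * n ^ r : ℝ)⁻¹ * (n ^ r * M) := by rw [Nat.abs_cast]; gcongr
    _ = 1 := by field_simp

end SignedBumps

section CellAverages

variable {d n : ℕ}

theorem volume_preimage_cellPoint (hn : n ≠ 0) (j : Fin d → Fin n) (S : Set (Fin d → ℝ)) :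
    volume (cellPoint j ⁻¹' S) = n ^ d * volume S := by
  have hpre : cellPoint j ⁻¹' S = (· + gridCorner j) ⁻¹' (((n : ℝ)⁻¹ • ·) ⁻¹' S) := rfl
  rw [hpre, measure_preimage_add_right,
    Measure.addHaar_preimage_smul _ (inv_ne_zero (Nat.cast_ne_zero.2 hn)), finrank_fin_fun, inv_pow,
    inv_inv, abs_of_nonneg (by positivity), ENNReal.ofReal_pow (Nat.cast_nonneg n),
    ENNReal.ofReal_natCast]

theorem measurable_cellPoint (j : Fin d → Fin n) : Measurable (cellPoint j) := by
  unfold cellPoint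
  fun_prop

theorem map_cellPoint_restrict_apply (hn : n ≠ 0) (j : Fin d → Fin n) (Z : Set (Fin d → ℝ))
    {s : Set (Fin d → ℝ)} (hs : MeasurableSet s) :
    (volume.restrict Z).map (cellPoint j) s =
      n ^ d * volume (s ∩ {y | (n : ℝ) • y - gridCorner j ∈ Z}) := by
  have hpre : cellPoint j ⁻¹' {y | (n : ℝ) • y - gridCorner j ∈ Z} = Z := by
    ext z
    rw [Set.mem_preimage, Set.mem_ofPred_eq, smul_cellPoint hn, add_sub_cancel_right]
  rw [Measure.map_apply (measurable_cellPoint j) hs,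
    Measure.restrict_apply (measurable_cellPoint j hs), ← volume_preimage_cellPoint hn j,
    Set.preimage_inter, hpre]

theorem sum_map_cellPoint_le (hn : n ≠ 0) {Z : Set (Fin d → ℝ)} (hZ : MeasurableSet Z)
    (hZsub : Z ⊆ halfOpenCube d) :
    ∑ j : Fin d → Fin n, (volume.restrict Z).map (cellPoint j) ≤
      (n ^ d : ENNReal) • volume.restrict (unitCube d) := by
  refine Measure.le_iff.2 fun s hs => ?_
  let piece (j : Fin d → Fin n) : Set (Fin d → ℝ) := {y | (n : ℝ) • y - gridCorner j ∈ Z}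
  have piece_measurable (j : Fin d → Fin n) : MeasurableSet (piece j) :=
    (show Measurable fun y : Fin d → ℝ => (n : ℝ) • y - gridCorner j by fun_prop) hZ
  have piece_disjoint : Pairwise (Function.onFun Disjoint piece) := fun j j' hjj' =>
    Set.disjoint_left.2 fun y hj hj' =>
      hjj' (subsingleton_setOf_sub_gridCorner_mem _ (hZsub hj) (hZsub hj'))
  have piece_subset (j : Fin d → Fin n) : piece j ⊆ unitCube d := fun y hy => by
    have hy' : cellPoint j ((n : ℝ) • y - gridCorner j) = y := by
      rw [cellPoint, sub_add_cancel, inv_smul_smul₀ (Nat.cast_ne_zero.2 hn)]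
    exact hy' ▸ cellPoint_mem_unitCube j (hZsub hy)
  calc (∑ j : Fin d → Fin n, (volume.restrict Z).map (cellPoint j)) s
      = n ^ d * ∑ j, volume (s ∩ piece j) := by
        simp_rw [Measure.finsetSum_apply, map_cellPoint_restrict_apply hn _ _ hs, mul_sum, piece]
    _ = n ^ d * volume (⋃ j, s ∩ piece j) := by
        rw [measure_iUnion (piece_disjoint.mono fun _ _ h =>
          h.mono Set.inter_subset_right Set.inter_subset_right)
          fun j => hs.inter (piece_measurable j), tsum_fintype]
    _ ≤ n ^ d * volume (s ∩ unitCube d) := by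
        gcongr
        exact Set.iUnion_subset fun j => Set.inter_subset_inter_right s (piece_subset j)
    _ = ((n ^ d : ENNReal) • volume.restrict (unitCube d)) s := by
        rw [Measure.smul_apply, Measure.restrict_apply hs, smul_eq_mul]

theorem setLIntegral_sum_cellPoint_le (hn : n ≠ 0) {Z : Set (Fin d → ℝ)} (hZ : MeasurableSet Z)
    (hZsub : Z ⊆ halfOpenCube d) {H : (Fin d → ℝ) → ENNReal} (hH : Measurable H) :
    ∫⁻ z in Z, ∑ j : Fin d → Fin n, H (cellPoint j z) ≤ n ^ d * ∫⁻ x in unitCube d, H x := by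
  calc ∫⁻ z in Z, ∑ j : Fin d → Fin n, H (cellPoint j z)
      = ∫⁻ x, H x ∂∑ j : Fin d → Fin n, (volume.restrict Z).map (cellPoint j) := by
        have hcomp (j : Fin d → Fin n) : Measurable fun z => H (cellPoint j z) :=
          hH.comp (measurable_cellPoint j)
        rw [lintegral_finsetSum _ fun j _ => hcomp j, lintegral_finsetSum_measure]
        simp_rw [lintegral_map hH (measurable_cellPoint _)]
    _ ≤ ∫⁻ x, H x ∂((n ^ d : ENNReal) • volume.restrict (unitCube d)) :=
        lintegral_mono' (sum_map_cellPoint_le hn hZ hZsub) le_rfl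
    _ = n ^ d * ∫⁻ x in unitCube d, H x := by rw [lintegral_smul_measure, smul_eq_mul]

theorem mul_volume_le_pow_mul_setIntegral (hn : n ≠ 0) {Z : Set (Fin d → ℝ)}
    (hZ : MeasurableSet Z) (hZsub : Z ⊆ halfOpenCube d) {H : (Fin d → ℝ) → ℝ} (hH : Measurable H)
    (hH₀ : 0 ≤ H) (hint : IntegrableOn H (unitCube d)) {c : ℝ}
    (hc : ∀ z ∈ Z, c ≤ ∑ j : Fin d → Fin n, H (cellPoint j z)) :
    c * volume.real Z ≤ n ^ d * ∫ x in unitCube d, H x := by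
  have hint₀ : 0 ≤ ∫ x in unitCube d, H x := integral_nonneg hH₀
  refine (ENNReal.ofReal_le_ofReal_iff (by positivity)).1 ?_
  calc ENNReal.ofReal (c * volume.real Z)
      ≤ ∫⁻ _ in Z, ENNReal.ofReal c := by
        rw [setLIntegral_const, ENNReal.ofReal_mul' measureReal_nonneg]
        gcongr
        exact ENNReal.ofReal_toReal_le
    _ ≤ ∫⁻ z in Z, ∑ j : Fin d → Fin n, ENNReal.ofReal (H (cellPoint j z)) :=
        setLIntegral_mono' hZ fun z hz => by
          rw [← ENNReal.ofReal_sum_of_nonneg fun j _ => hH₀ _]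
          exact ENNReal.ofReal_le_ofReal (hc z hz)
    _ ≤ n ^ d * ∫⁻ x in unitCube d, ENNReal.ofReal (H x) :=
        setLIntegral_sum_cellPoint_le hn hZ hZsub hH.ennreal_ofReal
    _ = ENNReal.ofReal (n ^ d * ∫ x in unitCube d, H x) := by
        rw [ENNReal.ofReal_mul (by positivity), ENNReal.ofReal_pow (Nat.cast_nonneg n),
          ENNReal.ofReal_natCast,
          ofReal_integral_eq_lintegral_ofReal hint (Filter.Eventually.of_forall hH₀)]

end CellAverages

section TensorApproximation

variable {d n m r b : ℕ} {A : ℝ} {f : (Fin d → ℝ) → ℝ}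

theorem nsmul_le_sum_of_le_card_filter_lt {ι : Type*} [Fintype ι] {h : ι → ℝ} (hh : 0 ≤ h) {c : ℝ}
    (hc : 0 ≤ c) (hb : b ≤ #{j | c < h j}) : b • c ≤ ∑ j, h j :=
  calc b • c ≤ #{j | c < h j} • c := nsmul_le_nsmul_left hc hb
    _ ≤ ∑ j with c < h j, h j := card_nsmul_le_sum _ _ _ fun _ hj => (mem_filter.1 hj).2.le
    _ ≤ ∑ j, h j := sum_le_univ_sum_of_nonneg hh

theorem le_theta1_of_forall_lt_card_tensor_far (hA : 0 ≤ A) (hn : n ≠ 0) {Z : Set (Fin d → ℝ)}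
    (hZ : MeasurableSet Z) (hZsub : Z ⊆ halfOpenCube d) (hf : Continuous f)
    {σ : (Fin d → Fin n) → ℤˣ} (hfσ : ∀ z ∈ Z, ∀ j, f (cellPoint j z) = A * (σ j : ℤ))
    (hσ : ∀ v : Fin m → Fin d → Fin n → ℝ,
      b < #{j | A / 2 < |A * (σ j : ℤ) - ∑ s, ∏ i, v s i (j i)|}) :
    b * (A / 2) * volume.real Z / n ^ d ≤ theta1 d m (volume.restrict (unitCube d)) f := by
  have hn₀ : (0 : ℝ) < n := Nat.cast_pos.2 (Nat.pos_of_ne_zero hn)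
  refine le_csInf ⟨_, fun _ _ _ => 0, fun _ _ => measurable_const,
    integrableOn_const (by rw [volume_unitCube]; exact ENNReal.one_ne_top), rfl⟩ ?_
  rintro _ ⟨u, hu, hint, rfl⟩
  rw [div_le_iff₀' (pow_pos hn₀ d)]
  have hf_int : IntegrableOn f (unitCube d) :=
    hf.continuousOn.integrableOn_compact isCompact_unitCube
  refine mul_volume_le_pow_mul_setIntegral hn hZ hZsub
    (H := fun x => |f x - ∑ s, ∏ i, u s i (x i)|) ?_ (fun _ => abs_nonneg _)
    (hf_int.sub hint).abs fun z hz => ?_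
  · have := hf.measurable
    fun_prop
  · simp_rw [hfσ z hz, ← nsmul_eq_mul]
    exact nsmul_le_sum_of_le_card_filter_lt (fun _ => abs_nonneg _) (by positivity)
      (hσ fun s i k => u s i ((n : ℝ)⁻¹ * (z i + (k : ℕ)))).le

theorem exists_mem_UCr_le_theta1 {M : ℝ} (hM : 0 < M)
    (hbound : ∀ k ≤ r, ∀ x, ‖iteratedFDeriv ℝ k (cellBump d) x‖ ≤ M) (hb : 0 < b)
    (hn : n ^ d = (2 ^ (d + 7)) ^ 2 * b) (hn₀ : n ≠ 0) (hm : m * (d * n) ≤ 2 ^ (d + 7) * b) :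
    ∃ f ∈ UCr d r, (M * n ^ r)⁻¹ * ((1 / 4) ^ d / (2 * (2 ^ (d + 7)) ^ 2)) ≤
      theta1 d m (volume.restrict (unitCube d)) f := by
  have hA : 0 < (M * n ^ r)⁻¹ := by positivity
  obtain ⟨σ, hσ⟩ := exists_sign_forall_lt_card_tensor_far hA hb hn hm
  refine ⟨signedBumps (M * n ^ r)⁻¹ σ, signedBumps_mem_UCr hM hbound hn₀ σ, ?_⟩
  have lower := le_theta1_of_forall_lt_card_tensor_far hA.le hn₀
    measurableSet_closedBall (closedBall_half_subset_halfOpenCube (by norm_num))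
    (contDiff_signedBumps (k := 0) _ σ).continuous
    (fun z hz j => signedBumps_cellPoint hn₀ _ σ j hz) hσ
  have volume_core : volume.real (Metric.closedBall (fun _ : Fin d => (1 / 2 : ℝ)) (1 / 8)) =
      (1 / 4) ^ d := by
    rw [measureReal_def, Real.volume_pi_closedBall _ (by norm_num), Fintype.card_fin,
      ENNReal.toReal_ofReal (by positivity)]
    norm_num
  refine le_of_eq_of_le ?_ lower
  have hnR : (n : ℝ) ^ d = (2 ^ (d + 7)) ^ 2 * b := by exact_mod_cast hn
  rw [volume_core, hnR]
  field_simp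

theorem theta1_le_one (hd : d ≠ 0) (hf : f ∈ UCr d r) :
    theta1 d m (volume.restrict (unitCube d)) f ≤ 1 := by
  have norm_le : ∀ x ∈ unitCube d, ‖|f x|‖ ≤ 1 := fun x hx => by
    simpa [iterPDW] using hf.2 [] (Nat.zero_le r) x hx
  have integral_le : ∫ x in unitCube d, |f x| ≤ 1 := by
    have norm_integral_le := norm_setIntegral_le_of_norm_le_const (μ := volume)
      (by rw [volume_unitCube]; exact ENNReal.one_lt_top) norm_le
    rw [measureReal_def, volume_unitCube, ENNReal.toReal_one, mul_one] at norm_integral_le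
    exact (le_abs_self _).trans norm_integral_le
  refine le_trans (csInf_le ⟨0, ?_⟩ ⟨fun _ _ _ => 0, fun _ _ => measurable_const, ?_, rfl⟩) ?_
  · rintro _ ⟨u, -, -, rfl⟩
    exact integral_nonneg fun _ => abs_nonneg _
  · simp [hd]
  · simpa [hd] using integral_le

theorem theta1_le_iSup (hd : d ≠ 0) (hf : f ∈ UCr d r) :
    theta1 d m (volume.restrict (unitCube d)) f ≤
      ⨆ g ∈ UCr d r, theta1 d m (volume.restrict (unitCube d)) g := by
  refine le_ciSup_of_le ⟨1, ?_⟩ f (ciSup_pos (f := fun _ => theta1 d m _ f) hf).ge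
  rintro _ ⟨g, rfl⟩
  exact Real.iSup_le (fun hg => theta1_le_one hd hg) zero_le_one

end TensorApproximation

section GridSize

theorem exists_le_pow_le_two_mul_rpow {k m : ℕ} (hk : k ≠ 0) (hm : 1 ≤ m) :
    ∃ y : ℕ, m ≤ y ^ k ∧ (y : ℝ) ≤ 2 * (m : ℝ) ^ (1 / (k : ℝ)) := by
  have hroot : (1 : ℝ) ≤ (m : ℝ) ^ (1 / (k : ℝ)) :=
    Real.one_le_rpow (Nat.one_le_cast.2 hm) (by positivity)
  refine ⟨⌈(m : ℝ) ^ (1 / (k : ℝ))⌉₊, ?_, ?_⟩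
  · have : (m : ℝ) ≤ (⌈(m : ℝ) ^ (1 / (k : ℝ))⌉₊ : ℝ) ^ k :=
      calc (m : ℝ) = ((m : ℝ) ^ (1 / (k : ℝ))) ^ k := by
            rw [one_div, Real.rpow_inv_natCast_pow (Nat.cast_nonneg m) hk]
        _ ≤ _ := by gcongr; exact Nat.le_ceil _
    exact_mod_cast this
  · linarith [Nat.ceil_lt_add_one (zero_le_one.trans hroot)]

theorem exists_grid_size {d a m : ℕ} (hd : 2 ≤ d) (ha : 0 < a) (hm : 1 ≤ m) :
    ∃ n b : ℕ, n ≠ 0 ∧ 0 < b ∧ n ^ d = a ^ 2 * b ∧ m * (d * n) ≤ a * b ∧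
      (n : ℝ) ≤ 2 * a * d * (m : ℝ) ^ (1 / ((d : ℝ) - 1)) := by
  obtain ⟨e, rfl⟩ := Nat.exists_eq_add_of_le' hd
  obtain ⟨y, hmy, hy⟩ := exists_le_pow_le_two_mul_rpow e.succ_ne_zero hm
  have hy₀ : 0 < y := Nat.pos_of_ne_zero fun h => by
    rw [h, zero_pow e.succ_ne_zero] at hmy
    lia
  refine ⟨a * ((e + 2) * y), a ^ e * ((e + 2) * y) ^ (e + 2), by positivity, by positivity,
    by rw [mul_pow, pow_add a]; ring, ?_, ?_⟩
  · calc m * ((e + 2) * (a * ((e + 2) * y)))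
        ≤ y ^ (e + 1) * ((e + 2) ^ (e + 1) * (a * ((e + 2) * y))) := by
          gcongr
          exact Nat.le_self_pow e.succ_ne_zero _
      _ = a * (1 * ((e + 2) * y) ^ (e + 2)) := by
          rw [mul_pow]
          ring
      _ ≤ a * (a ^ e * ((e + 2) * y) ^ (e + 2)) := by
          gcongr
          exact Nat.one_le_pow _ _ ha
  · have hexp : ((e + 2 : ℕ) : ℝ) - 1 = (e + 1 : ℕ) := by push_cast; ring
    rw [hexp]
    calc ((a * ((e + 2) * y) : ℕ) : ℝ) = a * (e + 2 : ℕ) * y := by push_cast; ring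
      _ ≤ a * (e + 2 : ℕ) * (2 * (m : ℝ) ^ (1 / ((e + 1 : ℕ) : ℝ))) := by gcongr
      _ = 2 * a * (e + 2 : ℕ) * (m : ℝ) ^ (1 / ((e + 1 : ℕ) : ℝ)) := by ring

theorem inv_pow_mul_rpow_neg_div_le {x y C e : ℝ} (hx : 0 ≤ x) (hy : 0 < y)
    (h : y ≤ C * x ^ (1 / e)) (r : ℕ) : (C ^ r)⁻¹ * x ^ (-(r : ℝ) / e) ≤ (y ^ r)⁻¹ := by
  have hroot : x ^ (-(r : ℝ) / e) = ((x ^ (1 / e)) ^ r)⁻¹ := by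
    rw [← Real.rpow_mul_natCast hx, ← Real.rpow_neg hx]
    ring_nf
  rw [hroot, ← mul_inv, ← mul_pow]
  gcongr

end GridSize

/-- Lower bound: `Θ_m(U(C^r[0,1]^d), L₁[0,1]^d) ≥ c(r,d) m^{-r/(d-1)}`. -/
theorem theta_UCr_lower (d r : ℕ) (hd : 2 ≤ d) (hr : 1 ≤ r) :
    ∃ c : ℝ, 0 < c ∧ ∀ m : ℕ, 1 ≤ m →
      c * (m : ℝ) ^ (-(r : ℝ) / ((d : ℝ) - 1)) ≤
        ⨆ f ∈ UCr d r, theta1 d m (volume.restrict (unitCube d)) f := by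
  obtain ⟨M, hM, hbound⟩ := exists_norm_iteratedFDeriv_le_of_hasCompactSupport
    ((cellBump d).contDiff (n := r)) (cellBump d).hasCompactSupport
  let κ : ℝ := (1 / 4) ^ d / (2 * (2 ^ (d + 7)) ^ 2)
  let C : ℝ := 2 * (2 ^ (d + 7) : ℕ) * d
  have hd₀ : d ≠ 0 := by lia
  refine ⟨M⁻¹ * (C ^ r)⁻¹ * κ, by positivity, fun m hm => ?_⟩
  obtain ⟨n, b, hn₀, hb, hn, hmn, hn_le⟩ := exists_grid_size hd (Nat.two_pow_pos (d + 7)) hm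
  obtain ⟨f, hf, hlow⟩ := exists_mem_UCr_le_theta1 hM hbound hb hn hn₀ hmn
  calc M⁻¹ * (C ^ r)⁻¹ * κ * (m : ℝ) ^ (-(r : ℝ) / ((d : ℝ) - 1))
      = M⁻¹ * ((C ^ r)⁻¹ * (m : ℝ) ^ (-(r : ℝ) / ((d : ℝ) - 1))) * κ := by ring
    _ ≤ M⁻¹ * (n ^ r : ℝ)⁻¹ * κ := by
        gcongr
        exact inv_pow_mul_rpow_neg_div_le (Nat.cast_nonneg m) (by positivity) hn_le r
    _ = (M * n ^ r)⁻¹ * κ := by rw [mul_inv]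
    _ ≤ theta1 d m (volume.restrict (unitCube d)) f := hlow
    _ ≤ ⨆ f ∈ UCr d r, theta1 d m (volume.restrict (unitCube d)) f := theta1_le_iSup hd₀ hf
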